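/- Let Ω ⊆ ℝ³ be open, let α : Ω → ℍ(ℂ) be a differentiable purely vectorial function and v : Ω → ℂ a function such that Dα + α² = −v on Ω (the quaternionic Riccati equation; here v is identified with v·e₀). Then for every twice differentiable scalar function φ : Ω → ℂ, the factorization (D + M^α)(D − M^α)φ = (−Δ + v)φ holds on Ω, i.e. D(Dφ − φα) + (Dφ − φα)·α = −Δφ + vφ. -/

import Mathlib

noncomputable section

abbrev HC := Quaternion ℂ

def e1 : HC := ⟨0, 1, 0, 0⟩
def e2 : HC := ⟨0, 0, 1, 0⟩
def e3 : HC := ⟨0, 0, 0, 1⟩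

def pd (k : Fin 3) (g : (Fin 3 → ℝ) → ℂ) (x : Fin 3 → ℝ) : ℂ :=
  fderiv ℝ g x (Pi.single k 1)

def lap (g : (Fin 3 → ℝ) → ℂ) (x : Fin 3 → ℝ) : ℂ :=
  pd 0 (pd 0 g) x + pd 1 (pd 1 g) x + pd 2 (pd 2 g) x

def pdq (k : Fin 3) (f : (Fin 3 → ℝ) → HC) (x : Fin 3 → ℝ) : HC :=
  ⟨pd k (fun y => (f y).re) x, pd k (fun y => (f y).imI) x,
   pd k (fun y => (f y).imJ) x, pd k (fun y => (f y).imK) x⟩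

def Dq (f : (Fin 3 → ℝ) → HC) (x : Fin 3 → ℝ) : HC :=
  e1 * pdq 0 f x + e2 * pdq 1 f x + e3 * pdq 2 f x

def lapq (f : (Fin 3 → ℝ) → HC) (x : Fin 3 → ℝ) : HC :=
  ⟨lap (fun y => (f y).re) x, lap (fun y => (f y).imI) x,
   lap (fun y => (f y).imJ) x, lap (fun y => (f y).imK) x⟩

def QDiffOn (f : (Fin 3 → ℝ) → HC) (Ω : Set (Fin 3 → ℝ)) : Prop :=
  DifferentiableOn ℝ (fun y => (f y).re) Ω ∧ DifferentiableOn ℝ (fun y => (f y).imI) Ω ∧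
  DifferentiableOn ℝ (fun y => (f y).imJ) Ω ∧ DifferentiableOn ℝ (fun y => (f y).imK) Ω

def QC2On (f : (Fin 3 → ℝ) → HC) (Ω : Set (Fin 3 → ℝ)) : Prop :=
  ContDiffOn ℝ 2 (fun y => (f y).re) Ω ∧ ContDiffOn ℝ 2 (fun y => (f y).imI) Ω ∧
  ContDiffOn ℝ 2 (fun y => (f y).imJ) Ω ∧ ContDiffOn ℝ 2 (fun y => (f y).imK) Ω


/-- Build a biquaternion from its four complex components. -/
def quat (a b c d : ℂ) : HC := ⟨a, b, c, d⟩

/-!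
A scalar `φ` commutes with the units `eₖ`, so the Leibniz rule reads `D(φα) = (Dφ)α + φ Dα`. Hence
the terms `±(Dφ)α` cancel in `(D + M^α)(D − M^α)φ`, leaving `D²φ − φ(Dα + α²)`. The units
anticommute and square to `−1` while mixed partial derivatives agree, so `D² = −Δ`; the Riccati
equation evaluates the remaining factor.
-/

open scoped Quaternion Topology

attribute [simps] e1 e2 e3 pdq

/-- Twice Fréchet differentiable at a point, without continuity of the second derivative; the first
derivative is required to exist on a neighbourhood. -/
def TwiceDifferentiableAt {E F : Type*} [NormedAddCommGroup E] [NormedSpace ℝ E]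
    [NormedAddCommGroup F] [NormedSpace ℝ F] (g : E → F) (x : E) : Prop :=
  (∀ᶠ y in 𝓝 x, DifferentiableAt ℝ g y) ∧ DifferentiableAt ℝ (fderiv ℝ g) x

/-- Differentiability of a biquaternion-valued function at a point, the pointwise form of `QDiffOn`.
It is stated by components because Mathlib has no norm on `Quaternion ℂ`. -/
def QDiffAt (f : (Fin 3 → ℝ) → HC) (x : Fin 3 → ℝ) : Prop :=
  DifferentiableAt ℝ (fun y => (f y).re) x ∧ DifferentiableAt ℝ (fun y => (f y).imI) x ∧
  DifferentiableAt ℝ (fun y => (f y).imJ) x ∧ DifferentiableAt ℝ (fun y => (f y).imK) x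

/-- Twofold differentiability of a biquaternion-valued function at a point, by components; the
domain of the identity `D² = −Δ`. -/
def QTwiceDiffAt (f : (Fin 3 → ℝ) → HC) (x : Fin 3 → ℝ) : Prop :=
  TwiceDifferentiableAt (fun y => (f y).re) x ∧ TwiceDifferentiableAt (fun y => (f y).imI) x ∧
  TwiceDifferentiableAt (fun y => (f y).imJ) x ∧ TwiceDifferentiableAt (fun y => (f y).imK) x

namespace TwiceDifferentiableAt

variable {E F : Type*} [NormedAddCommGroup E] [NormedSpace ℝ E]
  [NormedAddCommGroup F] [NormedSpace ℝ F] {g : E → F} {x : E}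

theorem of_contDiffAt (hg : ContDiffAt ℝ 2 g x) : TwiceDifferentiableAt g x :=
  ⟨(hg.eventually (by simp)).mono fun _ hy => hy.differentiableAt (by norm_num),
    (hg.fderiv_right (m := 1) (by norm_num)).differentiableAt (by norm_num)⟩

theorem differentiableAt (hg : TwiceDifferentiableAt g x) : DifferentiableAt ℝ g x :=
  hg.1.self_of_nhds

theorem const (c : F) : TwiceDifferentiableAt (fun _ : E => c) x :=
  of_contDiffAt contDiffAt_const

theorem fderiv_fderiv_comm (hg : TwiceDifferentiableAt g x) (u w : E) :
    fderiv ℝ (fderiv ℝ g) x u w = fderiv ℝ (fderiv ℝ g) x w u :=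
  second_derivative_symmetric_of_eventually (hg.1.mono fun _ hy => hy.hasFDerivAt)
    hg.2.hasFDerivAt u w

end TwiceDifferentiableAt

section PartialDerivatives

variable {g h : (Fin 3 → ℝ) → ℂ} {x : Fin 3 → ℝ}

theorem pd_const (k : Fin 3) (c : ℂ) (x : Fin 3 → ℝ) : pd k (fun _ => c) x = 0 := by
  simp [pd]

theorem pd_add (k : Fin 3) (hg : DifferentiableAt ℝ g x) (hh : DifferentiableAt ℝ h x) :
    pd k (fun y => g y + h y) x = pd k g x + pd k h x := by
  simp [pd, fderiv_fun_add hg hh]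

theorem pd_sub (k : Fin 3) (hg : DifferentiableAt ℝ g x) (hh : DifferentiableAt ℝ h x) :
    pd k (fun y => g y - h y) x = pd k g x - pd k h x := by
  simp [pd, fderiv_fun_sub hg hh]

theorem pd_mul (k : Fin 3) (hg : DifferentiableAt ℝ g x) (hh : DifferentiableAt ℝ h x) :
    pd k (fun y => g y * h y) x = pd k g x * h x + g x * pd k h x := by
  simp [pd, fderiv_fun_mul hg hh, add_comm, mul_comm]

theorem differentiableAt_pd (k : Fin 3) (hg : TwiceDifferentiableAt g x) :
    DifferentiableAt ℝ (pd k g) x :=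
  hg.2.clm_apply (differentiableAt_const _)

theorem pd_pd_eq_fderiv_fderiv (j k : Fin 3) (hg : TwiceDifferentiableAt g x) :
    pd j (pd k g) x = fderiv ℝ (fderiv ℝ g) x (Pi.single j 1) (Pi.single k 1) := by
  change fderiv ℝ (fun y => fderiv ℝ g y (Pi.single k 1)) x (Pi.single j 1) = _
  simp [fderiv_clm_apply hg.2 (differentiableAt_const _)]

theorem pd_comm (j k : Fin 3) (hg : TwiceDifferentiableAt g x) :
    pd j (pd k g) x = pd k (pd j g) x := by
  rw [pd_pd_eq_fderiv_fderiv j k hg, pd_pd_eq_fderiv_fderiv k j hg, hg.fderiv_fderiv_comm]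

end PartialDerivatives

section Ring

variable {A : Type*} [Ring A]

theorem sum_mul_sum_eq_neg_of_anticommute {u v w : A} (huu : u * u = -1) (hvv : v * v = -1)
    (hww : w * w = -1) (hvu : v * u = -(u * v)) (hwu : w * u = -(u * w)) (hwv : w * v = -(v * w))
    (a b c p q r : A) :
    u * (u * a + v * p + w * q) + v * (u * p + v * b + w * r) + w * (u * q + v * r + w * c) =
      -(a + b + c) := by
  simp only [mul_add, ← mul_assoc, huu, hvv, hww, hvu, hwu, hwv, neg_mul, one_mul]
  abel

theorem sub_add_sub_mul_eq_add_mul_of_riccati {a a' f w : A} (hRiccati : a' + a * a = -w)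
    (hfw : Commute f w) (f' f'' : A) :
    f'' - (f' * a + f * a') + (f' - f * a) * a = f'' + w * f := by
  calc f'' - (f' * a + f * a') + (f' - f * a) * a = f'' - f * (a' + a * a) := by noncomm_ring
    _ = f'' + w * f := by rw [hRiccati, mul_neg, sub_neg_eq_add, hfw.eq]

end Ring

section Biquaternionic

variable {f g : (Fin 3 → ℝ) → HC} {φ : (Fin 3 → ℝ) → ℂ} {x : Fin 3 → ℝ}

theorem QDiffOn.qDiffAt {Ω : Set (Fin 3 → ℝ)} (hf : QDiffOn f Ω) (hΩ : Ω ∈ 𝓝 x) : QDiffAt f x :=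
  ⟨hf.1.differentiableAt hΩ, hf.2.1.differentiableAt hΩ, hf.2.2.1.differentiableAt hΩ,
    hf.2.2.2.differentiableAt hΩ⟩

namespace QDiffAt

theorem const (c : HC) : QDiffAt (fun _ => c) x := by
  simp [QDiffAt]

theorem coe (hφ : DifferentiableAt ℝ φ x) : QDiffAt (fun y => (φ y : HC)) x := by
  simpa [QDiffAt] using hφ

theorem add (hf : QDiffAt f x) (hg : QDiffAt g x) : QDiffAt (fun y => f y + g y) x :=
  ⟨hf.1.add hg.1, hf.2.1.add hg.2.1, hf.2.2.1.add hg.2.2.1, hf.2.2.2.add hg.2.2.2⟩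

theorem mul (hf : QDiffAt f x) (hg : QDiffAt g x) : QDiffAt (fun y => f y * g y) x := by
  obtain ⟨hf₀, hf₁, hf₂, hf₃⟩ := hf
  obtain ⟨hg₀, hg₁, hg₂, hg₃⟩ := hg
  simp only [QDiffAt, Quaternion.re_mul, Quaternion.imI_mul, Quaternion.imJ_mul,
    Quaternion.imK_mul]
  refine ⟨?_, ?_, ?_, ?_⟩ <;> fun_prop

end QDiffAt

namespace QTwiceDiffAt

theorem coe (hφ : TwiceDifferentiableAt φ x) : QTwiceDiffAt (fun y => (φ y : HC)) x :=
  ⟨hφ, .const 0, .const 0, .const 0⟩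

theorem qDiffAt_pdq (k : Fin 3) (hf : QTwiceDiffAt f x) : QDiffAt (pdq k f) x :=
  ⟨differentiableAt_pd k hf.1, differentiableAt_pd k hf.2.1, differentiableAt_pd k hf.2.2.1,
    differentiableAt_pd k hf.2.2.2⟩

theorem qDiffAt_Dq (hf : QTwiceDiffAt f x) : QDiffAt (Dq f) x :=
  (((QDiffAt.const e1).mul (hf.qDiffAt_pdq 0)).add ((QDiffAt.const e2).mul (hf.qDiffAt_pdq 1))).add
    ((QDiffAt.const e3).mul (hf.qDiffAt_pdq 2))

end QTwiceDiffAt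

theorem pdq_const (k : Fin 3) (c : HC) (x : Fin 3 → ℝ) : pdq k (fun _ => c) x = 0 := by
  ext <;> simp [pd_const]

theorem pdq_coe (k : Fin 3) (φ : (Fin 3 → ℝ) → ℂ) (x : Fin 3 → ℝ) :
    pdq k (fun y => (φ y : HC)) x = (pd k φ x : HC) := by
  ext <;> simp [pd_const]

theorem pdq_add (k : Fin 3) (hf : QDiffAt f x) (hg : QDiffAt g x) :
    pdq k (fun y => f y + g y) x = pdq k f x + pdq k g x := by
  ext
  exacts [pd_add k hf.1 hg.1, pd_add k hf.2.1 hg.2.1, pd_add k hf.2.2.1 hg.2.2.1,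
    pd_add k hf.2.2.2 hg.2.2.2]

theorem pdq_sub (k : Fin 3) (hf : QDiffAt f x) (hg : QDiffAt g x) :
    pdq k (fun y => f y - g y) x = pdq k f x - pdq k g x := by
  ext
  exacts [pd_sub k hf.1 hg.1, pd_sub k hf.2.1 hg.2.1, pd_sub k hf.2.2.1 hg.2.2.1,
    pd_sub k hf.2.2.2 hg.2.2.2]

theorem pdq_mul (k : Fin 3) (hf : QDiffAt f x) (hg : QDiffAt g x) :
    pdq k (fun y => f y * g y) x = pdq k f x * g x + f x * pdq k g x := by
  obtain ⟨hf₀, hf₁, hf₂, hf₃⟩ := hf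
  obtain ⟨hg₀, hg₁, hg₂, hg₃⟩ := hg
  ext <;>
    simp (disch := fun_prop) only [re_pdq, imI_pdq, imJ_pdq, imK_pdq, Quaternion.re_mul,
      Quaternion.imI_mul, Quaternion.imJ_mul, Quaternion.imK_mul, Quaternion.re_add,
      Quaternion.imI_add, Quaternion.imJ_add, Quaternion.imK_add, pd_add, pd_sub, pd_mul] <;>
    ring

theorem pdq_const_mul (k : Fin 3) (c : HC) (hf : QDiffAt f x) :
    pdq k (fun y => c * f y) x = c * pdq k f x := by
  rw [pdq_mul k (.const c) hf, pdq_const, zero_mul, zero_add]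

theorem pdq_comm (j k : Fin 3) (hf : QTwiceDiffAt f x) :
    pdq j (pdq k f) x = pdq k (pdq j f) x := by
  ext
  exacts [pd_comm j k hf.1, pd_comm j k hf.2.1, pd_comm j k hf.2.2.1, pd_comm j k hf.2.2.2]

theorem pdq_Dq (j : Fin 3) (hf : QTwiceDiffAt f x) :
    pdq j (Dq f) x = e1 * pdq j (pdq 0 f) x + e2 * pdq j (pdq 1 f) x + e3 * pdq j (pdq 2 f) x := by
  have h₁ := (QDiffAt.const e1).mul (hf.qDiffAt_pdq 0)
  have h₂ := (QDiffAt.const e2).mul (hf.qDiffAt_pdq 1)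
  have h₃ := (QDiffAt.const e3).mul (hf.qDiffAt_pdq 2)
  change pdq j (fun y => e1 * pdq 0 f y + e2 * pdq 1 f y + e3 * pdq 2 f y) x = _
  rw [pdq_add j (h₁.add h₂) h₃, pdq_add j h₁ h₂, pdq_const_mul j e1 (hf.qDiffAt_pdq 0),
    pdq_const_mul j e2 (hf.qDiffAt_pdq 1), pdq_const_mul j e3 (hf.qDiffAt_pdq 2)]

theorem Dq_sub (hf : QDiffAt f x) (hg : QDiffAt g x) :
    Dq (fun y => f y - g y) x = Dq f x - Dq g x := by
  simp only [Dq, pdq_sub _ hf hg, mul_sub]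
  abel

theorem Dq_coe_mul (hφ : DifferentiableAt ℝ φ x) (hf : QDiffAt f x) :
    Dq (fun y => (φ y : HC) * f y) x = Dq (fun y => (φ y : HC)) x * f x + φ x * Dq f x := by
  have mul_coe_comm (e : HC) : e * (φ x : HC) = φ x * e := (Quaternion.coe_commutes _ _).symm
  simp only [Dq, pdq_mul _ (.coe hφ) hf, mul_add, add_mul, ← mul_assoc, mul_coe_comm]
  abel

theorem lapq_eq_sum_pdq_pdq (f : (Fin 3 → ℝ) → HC) (x : Fin 3 → ℝ) :
    lapq f x = pdq 0 (pdq 0 f) x + pdq 1 (pdq 1 f) x + pdq 2 (pdq 2 f) x := rfl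

theorem lapq_coe (φ : (Fin 3 → ℝ) → ℂ) (x : Fin 3 → ℝ) :
    lapq (fun y => (φ y : HC)) x = (lap φ x : HC) := by
  simp [lapq_eq_sum_pdq_pdq, funext (pdq_coe _ φ), pdq_coe, lap]

theorem e1_mul_e1 : e1 * e1 = -1 := by ext <;> simp

theorem e2_mul_e2 : e2 * e2 = -1 := by ext <;> simp

theorem e3_mul_e3 : e3 * e3 = -1 := by ext <;> simp

theorem e2_mul_e1 : e2 * e1 = -(e1 * e2) := by ext <;> simp

theorem e3_mul_e1 : e3 * e1 = -(e1 * e3) := by ext <;> simp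

theorem e3_mul_e2 : e3 * e2 = -(e2 * e3) := by ext <;> simp

theorem Dq_Dq (hf : QTwiceDiffAt f x) : Dq (Dq f) x = -lapq f x := by
  change e1 * pdq 0 (Dq f) x + e2 * pdq 1 (Dq f) x + e3 * pdq 2 (Dq f) x = _
  rw [lapq_eq_sum_pdq_pdq, pdq_Dq 0 hf, pdq_Dq 1 hf, pdq_Dq 2 hf, pdq_comm 1 0 hf,
    pdq_comm 2 0 hf, pdq_comm 2 1 hf]
  exact sum_mul_sum_eq_neg_of_anticommute e1_mul_e1 e2_mul_e2 e3_mul_e3 e2_mul_e1 e3_mul_e1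
    e3_mul_e2 ..

end Biquaternionic

theorem schroedinger_factorization_general {α : (Fin 3 → ℝ) → HC} {φ : (Fin 3 → ℝ) → ℂ}
    {x : Fin 3 → ℝ} {w : HC} (hα : QDiffAt α x) (hφ : TwiceDifferentiableAt φ x)
    (hRiccati : Dq α x + α x * α x = -w) :
    Dq (fun y => Dq (fun z => (φ z : HC)) y - (φ y : HC) * α y) x +
        (Dq (fun z => (φ z : HC)) x - (φ x : HC) * α x) * α x =
      -(lap φ x : HC) + w * (φ x : HC) := by
  have hφ₁ : DifferentiableAt ℝ φ x := hφ.differentiableAt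
  have hΦ : QTwiceDiffAt (fun y => (φ y : HC)) x := .coe hφ
  rw [Dq_sub hΦ.qDiffAt_Dq ((QDiffAt.coe hφ₁).mul hα), Dq_coe_mul hφ₁ hα,
    sub_add_sub_mul_eq_add_mul_of_riccati hRiccati (Quaternion.coe_commute _ _), Dq_Dq hΦ,
    lapq_coe]

/-- the quaternionic factorization (scfact) of the Schrödinger operator:
if `Dα + α² = −v` (quaternionic Riccati equation) with `α` purely vectorial, then for every
twice differentiable scalar `φ`: `(D + M^α)(D − M^α)φ = −Δφ + vφ`. -/
theorem schroedinger_factorization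
    (Ω : Set (Fin 3 → ℝ)) (hΩ : IsOpen Ω)
    (α : (Fin 3 → ℝ) → HC) (hα : QDiffOn α Ω)
    (hαvec : ∀ x ∈ Ω, (α x).re = 0)
    (v : (Fin 3 → ℝ) → ℂ)
    (hRiccati : ∀ x ∈ Ω, Dq α x + α x * α x = -((v x : ℂ) : HC))
    (φ : (Fin 3 → ℝ) → ℂ) (hφ : ContDiffOn ℝ 2 φ Ω) :
    ∀ x ∈ Ω,
      Dq (fun y => Dq (fun z => ((φ z : ℂ) : HC)) y - ((φ y : ℂ) : HC) * α y) x +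
        (Dq (fun z => ((φ z : ℂ) : HC)) x - ((φ x : ℂ) : HC) * α x) * α x =
      -((lap φ x : ℂ) : HC) + ((v x : ℂ) : HC) * ((φ x : ℂ) : HC) := by
  intro x hx
  have hΩx : Ω ∈ 𝓝 x := hΩ.mem_nhds hx
  exact schroedinger_factorization_general (hα.qDiffAt hΩx)
    (.of_contDiffAt (hφ.contDiffAt hΩx)) (hRiccati x hx)
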